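/- Let k be an algebraically closed field of characteristic zero, f ∈ S = k[x₁,…,xₙ], and ∂ ∈ k[y₁,…,yₙ] with ∂² ∘ f = 0; let m ≥ 2 and set g := f + X^m·(∂ ∘ f) ∈ k[x₁,…,xₙ,X]. Let J = k[y,α]·Ann_{k[y]}(f) + k[y,α]·α·Ann_{k[y]}(∂ ∘ f) ⊆ k[y₁,…,yₙ,α]. Then the k[t]-algebra B = k[y₁,…,yₙ,α,t]/((α^m − t·α − m!·∂) + J·k[y,α,t]) is flat as a k[t]-module; its fiber over t = 0 is isomorphic as a k-algebra to the apolar algebra of g, and for every λ ∈ k with λ ≠ 0 its fiber over t = λ, namely k[y₁,…,yₙ,α]/((α^m − λ·α − m!·∂) + J), is isomorphic as a k-algebra to the product of the apolar algebra of f with (m−1) copies of the apolar algebra of ∂ ∘ f. -/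

import Mathlib

/-- The apolarity action of `k[y₁,…,yₙ]` on `k[x₁,…,xₙ]`, in which `yᵢ` acts as
`∂/∂xᵢ`. -/
noncomputable def apolar {k : Type*} [CommSemiring k] {n : ℕ}
    (D f : MvPolynomial (Fin n) k) : MvPolynomial (Fin n) k :=
  ∑ a ∈ D.support, ∑ b ∈ f.support,
    MvPolynomial.monomial (b - a)
      (D.coeff a * f.coeff b * ∏ i : Fin n, ((b i).descFactorial (a i) : k))

/-- The ideal `J = k[y,α]·Ann_{k[y]}(f) + k[y,α]·α·Ann_{k[y]}(∂ ∘ f)` of `k[y₁,…,yₙ,α]`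
(realized as `k[y₁,…,yₙ₊₁]` with `α = yₙ₊₁`), built from the apolar ideals
`If = Ann_{k[y]}(f)` and `Idf = Ann_{k[y]}(∂ ∘ f)`. -/
noncomputable def auxIdeal {k : Type*} [Field k] {n : ℕ}
    (If Idf : Ideal (MvPolynomial (Fin n) k)) : Ideal (MvPolynomial (Fin (n + 1)) k) :=
  Ideal.map (MvPolynomial.rename (Fin.castSucc : Fin n → Fin (n + 1))) If ⊔
    Ideal.span ((fun e : MvPolynomial (Fin n) k =>
      MvPolynomial.X (Fin.last n) * MvPolynomial.rename Fin.castSucc e) '' (Idf : Set _))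

/-- The ideal `(α^m − t·α − m!·∂) + J·k[y,α,t]` of `k[y₁,…,yₙ,α,t]` (realized as
`k[y₁,…,yₙ₊₂]` with `α = yₙ₊₁`, `t = yₙ₊₂`). -/
noncomputable def totalIdeal {k : Type*} [Field k] {n : ℕ} (m : ℕ)
    (D : MvPolynomial (Fin n) k) (If Idf : Ideal (MvPolynomial (Fin n) k)) :
    Ideal (MvPolynomial (Fin (n + 2)) k) :=
  Ideal.span
    {(MvPolynomial.X (Fin.castSucc (Fin.last n)) : MvPolynomial (Fin (n + 2)) k) ^ m -
      MvPolynomial.X (Fin.last (n + 1)) * MvPolynomial.X (Fin.castSucc (Fin.last n)) -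
      MvPolynomial.C ((m.factorial : k)) *
        MvPolynomial.rename (Fin.castSucc ∘ Fin.castSucc) D}
  ⊔ Ideal.map (MvPolynomial.rename (Fin.castSucc : Fin (n + 1) → Fin (n + 2)))
      (auxIdeal If Idf)

/-- The structure map `k[t] → B = k[y,α,t]/((α^m − t·α − m!·∂) + J·k[y,α,t])`. -/
noncomputable def totalStructMap {k : Type*} [Field k] {n : ℕ} (m : ℕ)
    (D : MvPolynomial (Fin n) k) (If Idf : Ideal (MvPolynomial (Fin n) k)) :
    Polynomial k →+* (MvPolynomial (Fin (n + 2)) k ⧸ totalIdeal m D If Idf) :=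
  (Polynomial.aeval
    (Ideal.Quotient.mk (totalIdeal m D If Idf)
      (MvPolynomial.X (Fin.last (n + 1))))).toRingHom

section Helpers
open Polynomial

noncomputable def auxPoly {Q : Type*} [CommRing Q] (I I' : Ideal Q) : Ideal Q[X] :=
  Ideal.map C I ⊔ Ideal.span ((fun e : Q => X * C e) '' (I' : Set Q))

theorem auxPoly_span_eq {Q : Type*} [CommRing Q] (I' : Ideal Q) :
    Ideal.span ((fun e : Q => X * C e) '' (I' : Set Q)) = Ideal.span {(X : Q[X])} * Ideal.map C I' := by
  rw [Ideal.map, Ideal.span_mul_span']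
  congr 1
  ext p
  simp

theorem X_mul_mem_aux {Q : Type*} [CommRing Q] {I I' : Ideal Q} {p : Q[X]}
    (hp : p ∈ Ideal.map C I') : X * p ∈ auxPoly I I' := by
  refine Ideal.mem_sup_right ?_
  rw [auxPoly_span_eq]
  exact Ideal.mul_mem_mul (Ideal.mem_span_singleton_self _) hp

theorem mem_aux_iff {Q : Type*} [CommRing Q] {I I' : Ideal Q} {p : Q[X]} :
    p ∈ auxPoly I I' ↔ ∃ a ∈ Ideal.map C I, ∃ b ∈ Ideal.map C I', p = a + X * b := by
  rw [auxPoly, auxPoly_span_eq, Submodule.mem_sup]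
  simp only [Ideal.mem_span_singleton_mul]
  constructor
  · rintro ⟨a, ha, _, ⟨b, hb, rfl⟩, rfl⟩
    exact ⟨a, ha, b, hb, rfl⟩
  · rintro ⟨a, ha, b, hb, rfl⟩
    exact ⟨a, ha, _, ⟨b, hb, rfl⟩, rfl⟩

theorem mem_map_C_iff_map {Q : Type*} [CommRing Q] {I : Ideal Q} {p : Q[X]} :
    p ∈ Ideal.map C I ↔ p.map (Ideal.Quotient.mk I) = 0 := by
  rw [Ideal.mem_map_C_iff, Polynomial.ext_iff]
  simp [Ideal.Quotient.eq_zero_iff_mem]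

theorem mod_mem_map_C {Q : Type*} [CommRing Q] {I : Ideal Q} {p F : Q[X]} (hF : F.Monic)
    (hp : p ∈ Ideal.map C I) : p %ₘ F ∈ Ideal.map C I := by
  rw [mem_map_C_iff_map] at *
  rw [map_modByMonic _ hF, hp, zero_modByMonic]

theorem div_mem_map_C {Q : Type*} [CommRing Q] {I : Ideal Q} {p F : Q[X]} (hF : F.Monic)
    (hp : p ∈ Ideal.map C I) : p /ₘ F ∈ Ideal.map C I := by
  rw [mem_map_C_iff_map] at *
  rw [map_divByMonic _ hF, hp, zero_divByMonic]

theorem F_monic {Q : Type*} [CommRing Q] (s d : Q) {m : ℕ} (hm : 2 ≤ m) :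
    (X ^ m - C s * X - C d : Q[X]).Monic := by
  rw [sub_sub]
  apply monic_X_pow_sub
  refine lt_of_le_of_lt degree_linear_le ?_
  exact_mod_cast hm

theorem F_coeff_zero {Q : Type*} [CommRing Q] (s d : Q) {m : ℕ} (hm : 2 ≤ m) :
    (X ^ m - C s * X - C d : Q[X]).coeff 0 = - d := by
  have : m ≠ 0 := by lia
  simp [coeff_X_pow, this.symm]

theorem mem_bb_of {Q : Type*} [CommRing Q] {I I' : Ideal Q} {F p : Q[X]}
    (h0 : (p %ₘ F).coeff 0 ∈ I) (h1 : ∀ i, (p %ₘ F).coeff (i + 1) ∈ I') :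
    p ∈ Ideal.span {F} ⊔ auxPoly I I' := by
  rw [← modByMonic_add_div p F, add_comm]
  refine Ideal.add_mem _ (Ideal.mem_sup_left ?_) (Ideal.mem_sup_right ?_)
  · exact Ideal.mul_mem_right _ _ (Ideal.mem_span_singleton_self _)
  · rw [← X_mul_divX_add (p %ₘ F)]
    refine Ideal.add_mem _ (X_mul_mem_aux ?_) (Ideal.mem_sup_left (Ideal.mem_map_of_mem _ h0))
    rw [Ideal.mem_map_C_iff]
    intro i
    rw [coeff_divX]
    exact h1 i

theorem mod_coeff_zero_aux {Q : Type*} [CommRing Q] {d : Q}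
    {F : Q[X]} (hF0 : F.coeff 0 = - d) {b : Q[X]} :
    (X * b %ₘ F).coeff 0 = d * ((X * b) /ₘ F).coeff 0 := by
  have key : ∀ r q : Q[X], r + F * q = X * b → r.coeff 0 = d * q.coeff 0 := by
    intro r q h
    have h2 : (r + F * q).coeff 0 = (X * b).coeff 0 := by rw [h]
    rw [coeff_add, mul_coeff_zero, hF0, mul_coeff_zero, coeff_X_zero, zero_mul] at h2
    linear_combination h2
  exact key _ _ (modByMonic_add_div (X * b) F)

theorem of_mem_bb {Q : Type*} [CommRing Q] {I I' : Ideal Q} (hI : I ≤ I') {d : Q}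
    (hd : ∀ e ∈ I', d * e ∈ I) {F : Q[X]} (hF : F.Monic) (hF0 : F.coeff 0 = - d) {p : Q[X]}
    (hp : p ∈ Ideal.span {F} ⊔ auxPoly I I') :
    (p %ₘ F).coeff 0 ∈ I ∧ ∀ i, (p %ₘ F).coeff (i + 1) ∈ I' := by
  obtain ⟨u, hu, v, hv, hp1⟩ := Submodule.mem_sup.1 hp
  obtain ⟨a, ha, b, hb, hv1⟩ := mem_aux_iff.1 hv
  have hu1 : F ∣ u := Ideal.mem_span_singleton.1 hu
  have e1 : p %ₘ F = a %ₘ F + (X * b) %ₘ F := by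
    rw [← hp1, hv1, add_modByMonic, add_modByMonic, (modByMonic_eq_zero_iff_dvd hF).2 hu1,
      zero_add]
  rw [e1]
  have ha' : ∀ i, (a %ₘ F).coeff i ∈ I := Ideal.mem_map_C_iff.1 (mod_mem_map_C hF ha)
  have hXb : X * b ∈ Ideal.map C I' := Ideal.mul_mem_left _ _ hb
  have hb' : ∀ i, ((X * b) %ₘ F).coeff i ∈ I' := Ideal.mem_map_C_iff.1 (mod_mem_map_C hF hXb)
  have hq : ∀ i, ((X * b) /ₘ F).coeff i ∈ I' := Ideal.mem_map_C_iff.1 (div_mem_map_C hF hXb)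
  constructor
  · rw [coeff_add]
    refine Ideal.add_mem _ (ha' 0) ?_
    rw [mod_coeff_zero_aux hF0]
    exact hd _ (hq 0)
  · intro i
    rw [coeff_add]
    exact Ideal.add_mem _ (hI (ha' _)) (hb' _)

theorem regular_mem {k R : Type*} [Field k] [CommRing R] [Algebra k R] (I : Ideal R) {q : k[X]}
    (hq : q ≠ 0) {p : R[X]} (h : q.map (algebraMap k R) * p ∈ Ideal.map C I) :
    p ∈ Ideal.map C I := by
  rw [mem_map_C_iff_map] at *
  rw [Polynomial.map_mul, map_map] at h
  have hu : IsUnit (((q.map ((Ideal.Quotient.mk I).comp (algebraMap k R)))).coeff q.natDegree) := by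
    rw [coeff_map]
    exact (IsUnit.mk0 _ (leadingCoeff_ne_zero.2 hq)).map _
  have := mem_nonzeroDivisors_of_coeff_mem _ hu.mem_nonZeroDivisors
  exact this.1 _ h

theorem flat_core {k R : Type*} [Field k] [CommRing R] [Algebra k R] {I I' : Ideal R}
    (hI : I ≤ I') {d : R} (hd : ∀ e ∈ I', d * e ∈ I) {m : ℕ} (hm : 2 ≤ m)
    {q : k[X]} (hq : q ≠ 0) {p : R[X][X]}
    (h : C (q.map (algebraMap k R)) * p ∈ Ideal.span {(X ^ m - C X * X - C (C d) : R[X][X])} ⊔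
      auxPoly (Ideal.map C I) (Ideal.map C I')) :
    p ∈ Ideal.span {(X ^ m - C X * X - C (C d) : R[X][X])} ⊔
      auxPoly (Ideal.map C I) (Ideal.map C I') := by
  have hd' : ∀ e ∈ Ideal.map C I', C d * e ∈ Ideal.map C I := by
    intro e he
    rw [Ideal.mem_map_C_iff] at *
    intro i
    rw [coeff_C_mul]
    exact hd _ (he i)
  have := of_mem_bb (Ideal.map_mono hI) hd' (F_monic _ _ hm) (F_coeff_zero _ _ hm) h
  rw [← smul_eq_C_mul, smul_modByMonic] at this
  simp only [coeff_smul, smul_eq_mul] at this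
  exact mem_bb_of (regular_mem _ hq this.1) (fun i => regular_mem _ hq (this.2 i))

theorem exists_roots {k : Type*} [Field k] [IsAlgClosed k] [CharZero k] (N : ℕ) (hN : N ≠ 0)
    (lam : k) (hl : lam ≠ 0) : ∃ z : Fin N → k, Function.Injective z ∧
      (X ^ N - C lam : k[X]) = ∏ j, (X - C (z j)) := by
  classical
  have hsep : (X ^ N - C lam : k[X]).Separable :=
    separable_X_pow_sub_C lam (by exact_mod_cast hN) hl
  have hs := IsAlgClosed.splits (X ^ N - C lam : k[X])
  have hnd := nodup_roots hsep
  have hcard : (X ^ N - C lam : k[X]).roots.toFinset.card = N := by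
    rw [Multiset.toFinset_card_of_nodup hnd, ← hs.natDegree_eq_card_roots, natDegree_X_pow_sub_C]
  let e := (Finset.equivFinOfCardEq hcard).symm
  refine ⟨fun j => (e j : k), Subtype.val_injective.comp e.injective, ?_⟩
  have h1 := hs.eq_prod_roots_of_monic (monic_X_pow_sub_C lam hN)
  conv_lhs => rw [h1]
  rw [e.prod_comp (fun x => (X - C (x : k))), Finset.prod_coe_sort _ (fun x => X - C x)]
  rw [Finset.prod, Multiset.toFinset_val, hnd.dedup]

theorem exists_lagrange_idem {k : Type*} [Field k] {N : ℕ} {lam : k} (hl : lam ≠ 0) (hN : N ≠ 0)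
    (z : Fin N → k) (hz : Function.Injective z)
    (hM : (X ^ N - C lam : k[X]) = ∏ j, (X - C (z j))) :
    ∃ q : Fin N → k[X], (∀ j l, (X ^ 2 * q j).eval (z l) = if l = j then 1 else 0) ∧
      (∀ j, (X ^ N - C lam) ∣ q j * (X - C (z j))) ∧
      (X ^ N - C lam) ∣ (1 - ∑ j, X ^ 2 * q j) := by
  have hz0 : ∀ j, z j ≠ 0 := by
    intro j hj
    have := congrArg (eval (z j)) hM
    rw [eval_prod, Finset.prod_eq_zero (Finset.mem_univ j) (by simp)] at this
    simp [hj, hN, hl] at this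
  let P : Fin N → k[X] := fun j => ∏ l ∈ Finset.univ.erase j, (X - C (z l))
  have hP : ∀ j l, l ≠ j → (P j).eval (z l) = 0 := by
    intro j l h
    simp only [P, eval_prod]
    exact Finset.prod_eq_zero (Finset.mem_erase.2 ⟨h, Finset.mem_univ _⟩) (by simp)
  have hP' : ∀ j, (P j).eval (z j) ≠ 0 := by
    intro j
    simp only [P, eval_prod]
    refine Finset.prod_ne_zero_iff.2 fun l hl => ?_
    simp only [eval_sub, eval_X, eval_C]
    exact sub_ne_zero.2 (fun h => (Finset.ne_of_mem_erase hl) (hz h).symm)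
  have h1 : ∀ j l, (X ^ 2 * (C ((z j ^ 2 * (P j).eval (z j))⁻¹) * P j)).eval (z l)
      = if l = j then 1 else 0 := by
    intro j l
    split_ifs with h
    · subst h
      simp only [eval_mul, eval_pow, eval_X, eval_C]
      have := hP' l
      have := hz0 l
      field_simp
    · simp [hP j l h]
  refine ⟨fun j => C ((z j ^ 2 * (P j).eval (z j))⁻¹) * P j, h1, ?_, ?_⟩
  · intro j
    rw [hM, ← Finset.prod_erase_mul _ _ (Finset.mem_univ j), mul_assoc]
    exact Dvd.intro_left _ rfl
  · rw [hM]
    refine Finset.prod_dvd_of_coprime ?_ ?_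
    · intro i _ j _ hij
      exact pairwise_coprime_X_sub_C hz hij
    · intro i _
      rw [dvd_iff_isRoot, IsRoot.def, eval_sub, eval_finsetSum]
      simp only [h1]
      simp

theorem fiber_core {k R : Type*} [Field k] [IsAlgClosed k] [CharZero k] [CommRing R] [Algebra k R]
    {I I' : Ideal R} (hI : I ≤ I') {d : R} (hd : ∀ e ∈ I', d * e ∈ I) (hdI : d ∈ I')
    {m : ℕ} (hm : 2 ≤ m) (lam : k) (hl : lam ≠ 0) :
    Nonempty ((R[X] ⧸ (Ideal.span {(X ^ m - C (algebraMap k R lam) * X - C d : R[X])} ⊔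
      auxPoly I I')) ≃ₐ[k] ((R ⧸ I) × (Fin (m - 1) → R ⧸ I'))) := by
  obtain ⟨N, rfl⟩ : ∃ N, m = N + 1 := ⟨m - 1, by lia⟩
  have hN : N ≠ 0 := by lia
  rw [Nat.add_sub_cancel]
  obtain ⟨z, hz, hM⟩ := exists_roots N hN lam hl
  obtain ⟨q, hq1, hq2, hq3⟩ := exists_lagrange_idem hl hN z hz hM
  set φ := algebraMap k R with hφ
  set a : R := - (φ lam⁻¹ * d) with ha
  set F : R[X] := X ^ (N + 1) - C (φ lam) * X - C d with hF
  set A : Ideal R[X] := Ideal.span {F} ⊔ auxPoly I I' with hA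
  have hll : φ lam * φ lam⁻¹ = 1 := by rw [← map_mul, mul_inv_cancel₀ hl, map_one]
  have hla : φ lam * a = - d := by rw [ha]; linear_combination (-d) * hll
  have haI' : ∀ e ∈ I', a * e ∈ I := by
    intro e he
    have := I.mul_mem_left (- φ lam⁻¹) (hd e he)
    convert this using 1
    rw [ha]; ring
  have ha2 : a ^ 2 ∈ I := by
    rw [pow_two]
    exact haI' _ (by rw [ha]; exact I'.neg_mem (I'.mul_mem_left _ hdI))
  have hFA : F ∈ A := Ideal.mem_sup_left (Ideal.mem_span_singleton_self _)
  have hCA : ∀ i ∈ I, C i ∈ A := fun i hi =>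
    Ideal.mem_sup_right (Ideal.mem_sup_left (Ideal.mem_map_of_mem _ hi))
  have hXA : ∀ i ∈ I', X * C i ∈ A := fun i hi =>
    Ideal.mem_sup_right (X_mul_mem_aux (Ideal.mem_map_of_mem _ hi))
  have hMA : X ^ 2 * (X ^ N - C lam : k[X]).map φ ∈ A := by
    have := A.add_mem (A.mul_mem_left X hFA) (hXA d hdI)
    convert this using 1
    simp only [Polynomial.map_sub, Polynomial.map_pow, map_X, map_C, hF]
    ring
  let ψ : R[X] →ₐ[k] ((R ⧸ I) × (Fin N → R ⧸ I')) :=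
    AlgHom.prod ((Ideal.Quotient.mkₐ k I).comp ((aeval a).restrictScalars k))
      (AlgHom.pi fun j =>
        (Ideal.Quotient.mkₐ k I').comp ((aeval (φ (z j))).restrictScalars k))
  have hψ : ∀ p, ψ p = (Ideal.Quotient.mk I (p.eval a),
      fun j => Ideal.Quotient.mk I' (p.eval (φ (z j)))) := by
    intro p
    simp only [ψ, ← coe_aeval_eq_eval]
    rfl
  have hker : ∀ p, p ∈ RingHom.ker ψ ↔ p.eval a ∈ I ∧ ∀ j, p.eval (φ (z j)) ∈ I' := by
    intro p
    rw [RingHom.mem_ker, hψ, Prod.ext_iff, funext_iff]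
    simp [Ideal.Quotient.eq_zero_iff_mem]
  have hzN : ∀ j, z j ^ N = lam := by
    intro j
    have := congrArg (eval (z j)) hM
    rw [eval_prod, Finset.prod_eq_zero (Finset.mem_univ j) (by simp)] at this
    simpa [sub_eq_zero] using this
  have hsurj : Function.Surjective ψ := by
    rintro ⟨x, y⟩
    obtain ⟨x, rfl⟩ := Ideal.Quotient.mk_surjective x
    choose b hb using fun j => Ideal.Quotient.mk_surjective (y j)
    refine ⟨C x + ∑ j, C (b j - x) * (X ^ 2 * q j).map φ, ?_⟩
    rw [hψ]
    refine Prod.ext ?_ (funext fun l => ?_)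
    · simp only
      rw [Ideal.Quotient.mk_eq_mk_iff_sub_mem, eval_add, eval_C, add_sub_cancel_left,
        eval_finsetSum]
      refine Ideal.sum_mem _ fun j _ => ?_
      simp only [Polynomial.map_mul, Polynomial.map_pow, map_X, eval_mul, eval_pow, eval_X]
      exact I.mul_mem_left _ (I.mul_mem_right _ ha2)
    · simp only
      rw [← hb l]
      congr 1
      rw [eval_add, eval_finsetSum, eval_C]
      simp only [eval_mul, eval_C, eval_map, eval₂_at_apply, hq1]
      simp [apply_ite φ]
  have hkerA : RingHom.ker ψ = A := by
    apply le_antisymm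
    · intro p hp
      obtain ⟨hpa, hpz⟩ := (hker p).1 hp
      have h1 : ∀ j, (X ^ 2 * q j).map φ * p ∈ A := by
        intro j
        obtain ⟨u, hu⟩ := X_sub_C_dvd_sub_C_eval (a := φ (z j)) (p := p)
        obtain ⟨v, hv⟩ := hq2 j
        have hv' := congrArg (Polynomial.map φ) hv
        simp only [Polynomial.map_mul, Polynomial.map_sub, map_X, map_C] at hv'
        have e : (X ^ 2 * q j).map φ * p =
            (X ^ 2 * (X ^ N - C lam : k[X]).map φ) * (v.map φ * u) +
            (X * C (p.eval (φ (z j)))) * (X * (q j).map φ) := by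
          simp only [Polynomial.map_mul, Polynomial.map_sub, Polynomial.map_pow, map_X, map_C]
            at hv' ⊢
          linear_combination (X ^ 2 * (q j).map φ) * hu + X ^ 2 * u * hv'
        rw [e]
        exact A.add_mem (A.mul_mem_right _ hMA) (A.mul_mem_right _ (hXA _ (hpz j)))
      have h2 : (1 - ∑ j, X ^ 2 * q j).map φ * p ∈ A := by
        obtain ⟨u, hu⟩ := X_sub_C_dvd_sub_C_eval (a := a) (p := p)
        obtain ⟨w, hw⟩ := hq3
        set E := (1 - ∑ j, X ^ 2 * q j).map φ with hE
        have hEX : X ^ 2 * E ∈ A := by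
          rw [hE, hw, Polynomial.map_mul, ← mul_assoc]
          exact A.mul_mem_right _ hMA
        have hll' : (C (φ lam) * C (φ lam⁻¹) : R[X]) = 1 := by rw [← C_mul, hll, C_1]
        have hla' : (C (φ lam) * C a : R[X]) = - C d := by rw [← C_mul, hla, C_neg]
        have hpow : (X ^ (N + 1) : R[X]) = X ^ (N - 1) * X ^ 2 := by
          rw [← pow_add]; congr 1; lia
        have e : E * p = (X ^ 2 * E) * (X ^ (N - 1) * C (φ lam⁻¹) * u)
            + F * (- C (φ lam⁻¹) * E * u) + C (p.eval a) * E := by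
          rw [hF, hpow]
          linear_combination E * hu - E * u * (X - C a) * hll' - E * u * C (φ lam⁻¹) * hla'
        rw [e]
        exact A.add_mem (A.add_mem (A.mul_mem_right _ hEX) (A.mul_mem_right _ hFA))
          (A.mul_mem_right _ (hCA _ hpa))
      have e : p = (1 - ∑ j, X ^ 2 * q j).map φ * p + ∑ j, (X ^ 2 * q j).map φ * p := by
        rw [← Finset.sum_mul, ← add_mul, ← Polynomial.map_sum, ← Polynomial.map_add]
        simp
      rw [e]
      exact A.add_mem h2 (Ideal.sum_mem _ fun j _ => h1 j)
    · rw [hA, auxPoly, sup_le_iff, sup_le_iff]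
      refine ⟨?_, ?_, ?_⟩
      · rw [Ideal.span_singleton_le_iff_mem, hker]
        constructor
        · have : F.eval a = a ^ 2 * a ^ (N - 1) := by
            rw [← pow_add, show 2 + (N - 1) = N + 1 by lia]
            simp only [hF, eval_sub, eval_pow, eval_X, eval_mul, eval_C, hla]
            ring
          rw [this]
          exact I.mul_mem_right _ ha2
        · intro j
          have : F.eval (φ (z j)) = - d := by
            have h := congrArg φ (hzN j)
            rw [map_pow] at h
            simp only [hF, eval_sub, eval_pow, eval_X, eval_mul, eval_C, pow_succ, h]
            ring
          rw [this]
          exact I'.neg_mem hdI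
      · rw [Ideal.map_le_iff_le_comap]
        intro i hi
        rw [Ideal.mem_comap, hker]
        simp only [eval_C]
        exact ⟨hi, fun _ => hI hi⟩
      · rw [Ideal.span_le]
        rintro _ ⟨i, hi, rfl⟩
        rw [SetLike.mem_coe, hker]
        simp only [eval_mul, eval_X, eval_C]
        exact ⟨haI' _ hi, fun _ => I'.mul_mem_left _ hi⟩
  exact ⟨(Ideal.quotientEquivAlgOfEq k hkerA.symm).trans
    (Ideal.quotientKerAlgEquivOfSurjective hsurj)⟩

theorem apolar_eq_sum {k : Type*} [CommSemiring k] {n : ℕ} (D f : MvPolynomial (Fin n) k)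
    {s t : Finset (Fin n →₀ ℕ)} (hs : D.support ⊆ s) (ht : f.support ⊆ t) :
    apolar D f = ∑ a ∈ s, ∑ b ∈ t, MvPolynomial.monomial (b - a)
      (D.coeff a * f.coeff b * ∏ i : Fin n, ((b i).descFactorial (a i) : k)) := by
  rw [apolar]
  rw [Finset.sum_subset hs]
  · refine Finset.sum_congr rfl fun a _ => ?_
    refine Finset.sum_subset ht fun b _ hb => ?_
    rw [MvPolynomial.notMem_support_iff.1 hb]
    simp
  · intro a _ ha
    rw [MvPolynomial.notMem_support_iff.1 ha]
    simp

theorem apolar_add_left {k : Type*} [CommSemiring k] {n : ℕ} (D E f : MvPolynomial (Fin n) k) :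
    apolar (D + E) f = apolar D f + apolar E f := by
  classical
  rw [apolar_eq_sum (D + E) f MvPolynomial.support_add (Finset.Subset.refl _),
    apolar_eq_sum D f (Finset.subset_union_left (s₂ := E.support)) (Finset.Subset.refl _),
    apolar_eq_sum E f (Finset.subset_union_right (s₁ := D.support)) (Finset.Subset.refl _)]
  simp only [← Finset.sum_add_distrib, MvPolynomial.coeff_add, ← map_add, add_mul]

theorem apolar_add_right {k : Type*} [CommSemiring k] {n : ℕ} (D f g : MvPolynomial (Fin n) k) :
    apolar D (f + g) = apolar D f + apolar D g := by
  classical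
  rw [apolar_eq_sum D (f + g) (Finset.Subset.refl _) MvPolynomial.support_add,
    apolar_eq_sum D f (Finset.Subset.refl _) (Finset.subset_union_left (s₂ := g.support)),
    apolar_eq_sum D g (Finset.Subset.refl _) (Finset.subset_union_right (s₁ := f.support))]
  simp only [← Finset.sum_add_distrib, MvPolynomial.coeff_add, ← map_add, add_mul, mul_add]

theorem apolar_zero_left {k : Type*} [CommSemiring k] {n : ℕ} (f : MvPolynomial (Fin n) k) :
    apolar 0 f = 0 := by simp [apolar]

theorem apolar_zero_right {k : Type*} [CommSemiring k] {n : ℕ} (f : MvPolynomial (Fin n) k) :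
    apolar f 0 = 0 := by simp [apolar]

theorem apolar_monomial {k : Type*} [CommSemiring k] {n : ℕ} (a b : Fin n →₀ ℕ) (c e : k) :
    apolar (MvPolynomial.monomial a c) (MvPolynomial.monomial b e) =
      MvPolynomial.monomial (b - a) (c * e * ∏ i : Fin n, ((b i).descFactorial (a i) : k)) := by
  classical
  rw [apolar_eq_sum _ _ (MvPolynomial.support_monomial_subset)
    (MvPolynomial.support_monomial_subset)]
  simp

theorem apolar_C_mul_left {k : Type*} [CommSemiring k] {n : ℕ} (c : k)
    (D f : MvPolynomial (Fin n) k) :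
    apolar (MvPolynomial.C c * D) f = MvPolynomial.C c * apolar D f := by
  classical
  have hs : (MvPolynomial.C c * D).support ⊆ D.support := by
    intro x hx
    rw [MvPolynomial.mem_support_iff] at *
    intro h
    exact hx (by simp [h])
  rw [apolar_eq_sum _ f hs (Finset.Subset.refl _), apolar]
  simp only [Finset.mul_sum, MvPolynomial.C_mul_monomial, MvPolynomial.coeff_C_mul, mul_assoc]

theorem apolar_mul {k : Type*} [CommSemiring k] {n : ℕ} (D E f : MvPolynomial (Fin n) k) :
    apolar (D * E) f = apolar D (apolar E f) := by
  induction f using MvPolynomial.induction_on' with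
  | add p q hp hq => simp only [apolar_add_right, hp, hq]
  | monomial b e =>
    induction D using MvPolynomial.induction_on' with
    | add p q hp hq => simp only [add_mul, apolar_add_left, hp, hq]
    | monomial a c =>
      induction E using MvPolynomial.induction_on' with
      | add p q hp hq => simp only [mul_add, apolar_add_left, apolar_add_right, hp, hq]
      | monomial a' c' =>
        rw [MvPolynomial.monomial_mul, apolar_monomial, apolar_monomial, apolar_monomial]
        have h1 : b - (a + a') = b - a' - a := by
          rw [add_comm, tsub_add_eq_tsub_tsub]
        have h2 : ∀ i : Fin n, (((b i).descFactorial ((a + a') i) : ℕ) : k) =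
            (((b - a') i).descFactorial (a i) : k) * ((b i).descFactorial (a' i) : k) := by
          intro i
          rw [← Nat.cast_mul, Finsupp.add_apply, Finsupp.tsub_apply,
            ← Nat.descFactorial_mul_descFactorial (Nat.le_add_left (a' i) (a i)),
            Nat.add_sub_cancel]
        rw [h1]
        simp only [h2, Finset.prod_mul_distrib]
        congr 1
        ring

theorem apolar_sum_left {k : Type*} [CommSemiring k] {n : ℕ} {ι : Type*} (s : Finset ι)
    (D : ι → MvPolynomial (Fin n) k) (f : MvPolynomial (Fin n) k) :
    apolar (∑ i ∈ s, D i) f = ∑ i ∈ s, apolar (D i) f := by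
  classical
  induction s using Finset.induction_on with
  | empty => simp [apolar_zero_left]
  | insert a s ha ih => rw [Finset.sum_insert ha, Finset.sum_insert ha, apolar_add_left, ih]


open MvPolynomial in
theorem apolar_lift {k : Type*} [CommSemiring k] {n : ℕ} (i j : ℕ) (e h : MvPolynomial (Fin n) k) :
    apolar (X (Fin.last n) ^ i * rename Fin.castSucc e) (X (Fin.last n) ^ j * rename Fin.castSucc h)
      = MvPolynomial.C (j.descFactorial i : k) *
        (X (Fin.last n) ^ (j - i) * rename Fin.castSucc (apolar e h)) := by
  induction h using MvPolynomial.induction_on' with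
  | add p q hp hq => simp only [map_add, mul_add, apolar_add_right, hp, hq]
  | monomial b d =>
    induction e using MvPolynomial.induction_on' with
    | add p q hp hq => simp only [map_add, mul_add, apolar_add_left, hp, hq]
    | monomial a c =>
      have hX : ∀ (i : ℕ) (a : Fin n →₀ ℕ) (c : k),
          X (Fin.last n) ^ i * rename Fin.castSucc (monomial a c) =
          monomial (Finsupp.single (Fin.last n) i + Finsupp.mapDomain Fin.castSucc a) c := by
        intro i a c
        rw [MvPolynomial.X_pow_eq_monomial, rename_monomial, MvPolynomial.monomial_mul, one_mul]
      have hl : ∀ (i : ℕ) (a : Fin n →₀ ℕ),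
          (Finsupp.single (Fin.last n) i + Finsupp.mapDomain Fin.castSucc a) (Fin.last n) = i := by
        intro i a
        rw [Finsupp.add_apply, Finsupp.single_eq_same, Finsupp.mapDomain_of_notMem_range, add_zero]
        rintro ⟨x, hx⟩
        exact (Fin.castSucc_lt_last x).ne hx
      have hc : ∀ (i : ℕ) (a : Fin n →₀ ℕ) (x : Fin n),
          (Finsupp.single (Fin.last n) i + Finsupp.mapDomain Fin.castSucc a) (Fin.castSucc x)
            = a x := by
        intro i a x
        rw [Finsupp.add_apply, Finsupp.single_eq_of_ne (Fin.castSucc_lt_last x).ne,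
          Finsupp.mapDomain_apply (Fin.castSucc_injective n), zero_add]
      rw [hX, hX, apolar_monomial, apolar_monomial, hX, MvPolynomial.C_mul_monomial, Fin.prod_univ_castSucc]
      simp only [hl, hc]
      congr 1
      · congr 1
        ext x
        refine Fin.lastCases ?_ (fun x => ?_) x
        · rw [Finsupp.tsub_apply, hl, hl, hl]
        · rw [Finsupp.tsub_apply, hc, hc, hc, Finsupp.tsub_apply]
      · ring

noncomputable def lastEquiv (k : Type*) [Field k] (n : ℕ) :
    MvPolynomial (Fin (n + 1)) k ≃ₐ[k] (MvPolynomial (Fin n) k)[X] :=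
  (MvPolynomial.renameEquiv k finSuccEquivLast).trans (MvPolynomial.optionEquivLeft k (Fin n))

theorem lastEquiv_last (k : Type*) [Field k] (n : ℕ) :
    lastEquiv k n (MvPolynomial.X (Fin.last n)) = X := by
  simp [lastEquiv]

theorem lastEquiv_C (k : Type*) [Field k] (n : ℕ) (c : k) :
    lastEquiv k n (MvPolynomial.C c) = C (MvPolynomial.C c) := by
  simp [lastEquiv]

theorem lastEquiv_rename (k : Type*) [Field k] (n : ℕ) (p : MvPolynomial (Fin n) k) :
    lastEquiv k n (MvPolynomial.rename Fin.castSucc p) = C p := by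
  induction p using MvPolynomial.induction_on with
  | C a => rw [MvPolynomial.rename_C, lastEquiv_C]
  | add p q hp hq => rw [map_add, map_add, hp, hq, C_add]
  | mul_X p i hp =>
    rw [map_mul, map_mul, hp, C_mul, MvPolynomial.rename_X]
    simp [lastEquiv]

theorem map_auxIdeal {k : Type*} [Field k] {n : ℕ} (If Idf : Ideal (MvPolynomial (Fin n) k)) :
    (auxIdeal If Idf).map (lastEquiv k n : _ →+* (MvPolynomial (Fin n) k)[X]) = auxPoly If Idf := by
  rw [auxIdeal, Ideal.map_sup, Ideal.map_span, auxPoly]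
  congr 1
  · change Ideal.map _ (Ideal.span _) = Ideal.span _
    rw [Ideal.map_span]
    congr 1
    rw [Set.image_image]
    exact Set.image_congr fun x _ => lastEquiv_rename k n x
  · rw [Set.image_image]
    congr 1
    refine Set.image_congr fun x _ => ?_
    rw [RingHom.coe_coe, map_mul, lastEquiv_rename, lastEquiv_last]

noncomputable def fibIdeal {k : Type*} [Field k] {n : ℕ} (m : ℕ) (lam : k)
    (D : MvPolynomial (Fin n) k) (If Idf : Ideal (MvPolynomial (Fin n) k)) :
    Ideal (MvPolynomial (Fin (n + 1)) k) :=
  Ideal.span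
    {(MvPolynomial.X (Fin.last n) : MvPolynomial (Fin (n + 1)) k) ^ m -
      MvPolynomial.C lam * MvPolynomial.X (Fin.last n) -
      MvPolynomial.C ((m.factorial : k)) * MvPolynomial.rename Fin.castSucc D}
    ⊔ auxIdeal If Idf

theorem map_fibIdeal {k : Type*} [Field k] {n : ℕ} (m : ℕ) (lam : k)
    (D : MvPolynomial (Fin n) k) (If Idf : Ideal (MvPolynomial (Fin n) k)) :
    (fibIdeal m lam D If Idf).map (lastEquiv k n : _ →+* (MvPolynomial (Fin n) k)[X]) =
      Ideal.span {(X ^ m - C (algebraMap k _ lam) * X -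
        C (MvPolynomial.C (m.factorial : k) * D) : (MvPolynomial (Fin n) k)[X])} ⊔
        auxPoly If Idf := by
  rw [fibIdeal, Ideal.map_sup, map_auxIdeal, Ideal.map_span, Set.image_singleton]
  congr 3
  rw [RingHom.coe_coe]
  simp only [map_sub, map_mul, map_pow, lastEquiv_rename, lastEquiv_last, lastEquiv_C,
    MvPolynomial.algebraMap_eq]

theorem mem_of_map_mem {k A B : Type*} [Field k] [CommRing A] [CommRing B] [Algebra k A]
    [Algebra k B] (T : A ≃ₐ[k] B) {I : Ideal A} {p : A} (h : T p ∈ I.map (T : A →+* B)) :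
    p ∈ I := by
  obtain ⟨x, hx, hxp⟩ := (Ideal.mem_map_iff_of_surjective (T : A →+* B) T.surjective).1 h
  rwa [← T.injective hxp]

noncomputable def totEquiv (k : Type*) [Field k] (n : ℕ) :
    MvPolynomial (Fin (n + 2)) k ≃ₐ[k] (MvPolynomial (Fin n) k)[X][X] :=
  (lastEquiv k (n + 1)).trans ((mapAlgEquiv (lastEquiv k n)).trans
    (Bivariate.swap.restrictScalars k))

theorem totEquiv_apply (k : Type*) [Field k] (n : ℕ) (p) : totEquiv k n p =
    Bivariate.swap ((lastEquiv k (n + 1) p).map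
      (lastEquiv k n : _ →+* (MvPolynomial (Fin n) k)[X])) := rfl

theorem totEquiv_last (k : Type*) [Field k] (n : ℕ) :
    totEquiv k n (MvPolynomial.X (Fin.last (n + 1))) = C X := by
  rw [totEquiv_apply, lastEquiv_last, map_X, Bivariate.swap_Y]

theorem totEquiv_rename (k : Type*) [Field k] (n : ℕ) (p : MvPolynomial (Fin (n + 1)) k) :
    totEquiv k n (MvPolynomial.rename Fin.castSucc p) = (lastEquiv k n p).map C := by
  rw [totEquiv_apply, lastEquiv_rename, map_C, RingHom.coe_coe, Bivariate.swap_C]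

theorem totEquiv_X (k : Type*) [Field k] (n : ℕ) :
    totEquiv k n (MvPolynomial.X (Fin.castSucc (Fin.last n))) = X := by
  rw [← MvPolynomial.rename_X, totEquiv_rename, lastEquiv_last, map_X]

theorem totEquiv_rename_rename (k : Type*) [Field k] (n : ℕ) (p : MvPolynomial (Fin n) k) :
    totEquiv k n (MvPolynomial.rename Fin.castSucc (MvPolynomial.rename Fin.castSucc p))
      = C (C p) := by
  rw [totEquiv_rename, lastEquiv_rename, map_C]

theorem totEquiv_C (k : Type*) [Field k] (n : ℕ) (c : k) :
    totEquiv k n (MvPolynomial.C c) = C (C (MvPolynomial.C c)) := by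
  rw [← MvPolynomial.rename_C Fin.castSucc, totEquiv_rename, lastEquiv_C, map_C]

theorem map_totalIdeal {k : Type*} [Field k] {n : ℕ} (m : ℕ)
    (D : MvPolynomial (Fin n) k) (If Idf : Ideal (MvPolynomial (Fin n) k)) :
    (totalIdeal m D If Idf).map (totEquiv k n : _ →+* (MvPolynomial (Fin n) k)[X][X]) =
      Ideal.span {(X ^ m - C X * X -
        C (C (MvPolynomial.C (m.factorial : k) * D)) : (MvPolynomial (Fin n) k)[X][X])} ⊔
        auxPoly (Ideal.map C If) (Ideal.map C Idf) := by
  rw [totalIdeal, Ideal.map_sup, Ideal.map_span, Set.image_singleton]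
  congr 1
  · congr 2
    rw [RingHom.coe_coe, ← MvPolynomial.rename_rename]
    simp only [map_sub, map_mul, map_pow, totEquiv_X, totEquiv_last, totEquiv_C,
      totEquiv_rename_rename]
  · have key : (auxIdeal If Idf).map (MvPolynomial.rename (Fin.castSucc : Fin (n+1) → Fin (n+2))
        : _ →ₐ[k] MvPolynomial (Fin (n + 2)) k) =
        Ideal.span ((fun e => MvPolynomial.rename Fin.castSucc
          (MvPolynomial.rename Fin.castSucc e)) '' (If : Set (MvPolynomial (Fin n) k))) ⊔
        Ideal.span ((fun e => MvPolynomial.X (Fin.castSucc (Fin.last n)) *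
          MvPolynomial.rename Fin.castSucc
          (MvPolynomial.rename Fin.castSucc e)) '' (Idf : Set (MvPolynomial (Fin n) k))) := by
      rw [auxIdeal, Ideal.map_sup, Ideal.map_span]
      congr 1
      · change Ideal.map _ (Ideal.span _) = Ideal.span _
        rw [Ideal.map_span, Set.image_image]
      · rw [Set.image_image]
        simp only [map_mul, MvPolynomial.rename_X]
    have hCC : ∀ I : Ideal (MvPolynomial (Fin n) k), Ideal.map C (Ideal.map C I) =
        Ideal.span ((fun e => (C (C e) : (MvPolynomial (Fin n) k)[X][X])) '' (I : Set _)) := by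
      intro I
      rw [Ideal.map_map, Ideal.map]
      rfl
    rw [key, Ideal.map_sup, Ideal.map_span, Ideal.map_span, auxPoly, auxPoly_span_eq, hCC, hCC,
      Ideal.span_mul_span']
    congr 1
    · rw [Set.image_image]
      congr 1
      exact Set.image_congr fun x _ => totEquiv_rename_rename k n x
    · rw [Set.image_image]
      congr 1
      rw [Set.singleton_mul, Set.image_image]
      refine Set.image_congr fun x _ => ?_
      rw [RingHom.coe_coe, map_mul, totEquiv_rename_rename, totEquiv_X]

theorem flat_total {k : Type*} [Field k] {n : ℕ} (m : ℕ) (hm : 2 ≤ m)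
    (D : MvPolynomial (Fin n) k) (If Idf : Ideal (MvPolynomial (Fin n) k))
    (hI : If ≤ Idf) (hd : ∀ e ∈ Idf, MvPolynomial.C (m.factorial : k) * D * e ∈ If) :
    RingHom.Flat (totalStructMap m D If Idf) := by
  unfold RingHom.Flat
  let _ := (totalStructMap m D If Idf).toAlgebra
  change Module.Flat k[X] (MvPolynomial (Fin (n + 2)) k ⧸ totalIdeal m D If Idf)
  rw [IsDedekindDomain.flat_iff_torsion_eq_bot, eq_bot_iff]
  intro b hb
  rw [Submodule.mem_torsion_iff] at hb
  obtain ⟨⟨q, hq0⟩, hq⟩ := hb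
  have hq1 : q ≠ 0 := nonZeroDivisors.ne_zero hq0
  obtain ⟨p, rfl⟩ := Ideal.Quotient.mk_surjective b
  have hq2 : totalStructMap m D If Idf q * Ideal.Quotient.mk _ p = 0 := hq
  have hq3 : totalStructMap m D If Idf q = Ideal.Quotient.mk (totalIdeal m D If Idf)
      (aeval (MvPolynomial.X (Fin.last (n + 1))) q) :=
    Polynomial.aeval_algHom_apply (Ideal.Quotient.mkₐ k (totalIdeal m D If Idf)) _ q
  rw [hq3, ← map_mul, Ideal.Quotient.eq_zero_iff_mem] at hq2
  have h4 := Ideal.mem_map_of_mem (totEquiv k n : _ →+* (MvPolynomial (Fin n) k)[X][X]) hq2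
  have h5 : totEquiv k n (aeval (MvPolynomial.X (Fin.last (n + 1))) q) =
      C (q.map (algebraMap k (MvPolynomial (Fin n) k))) := by
    rw [← Polynomial.aeval_algHom_apply, totEquiv_last]
    have : (C X : (MvPolynomial (Fin n) k)[X][X]) = CAlgHom (R := k) X := rfl
    rw [this, Polynomial.aeval_algHom_apply, CAlgHom_apply]
    congr 1
  rw [RingHom.coe_coe, map_mul, h5, map_totalIdeal] at h4
  have h6 := flat_core hI hd hm hq1 h4
  rw [← map_totalIdeal] at h6
  have := mem_of_map_mem _ h6
  rw [Submodule.mem_bot, Ideal.Quotient.eq_zero_iff_mem]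
  exact this

theorem Ig_eq_fibIdeal {k : Type*} [Field k] [CharZero k] {n : ℕ}
    (f D : MvPolynomial (Fin n) k)
    (hD : apolar (D * D) f = 0)
    (m : ℕ) (hm : 2 ≤ m)
    (g : MvPolynomial (Fin (n + 1)) k)
    (hg : g = MvPolynomial.rename Fin.castSucc f +
      (MvPolynomial.X (Fin.last n)) ^ m *
        MvPolynomial.rename Fin.castSucc (apolar D f))
    (If Idf : Ideal (MvPolynomial (Fin n) k)) (Ig : Ideal (MvPolynomial (Fin (n + 1)) k))
    (hIf : ∀ e, e ∈ If ↔ apolar e f = 0)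
    (hIdf : ∀ e, e ∈ Idf ↔ apolar e (apolar D f) = 0)
    (hIg : ∀ e, e ∈ Ig ↔ apolar e g = 0) (hI : If ≤ Idf) :
    Ig = fibIdeal m 0 D If Idf := by
  have hm0 : m ≠ 0 := by lia
  -- action of `α^i e` on `g`
  have act : ∀ (i : ℕ) (e : MvPolynomial (Fin n) k),
      apolar (MvPolynomial.X (Fin.last n) ^ i * MvPolynomial.rename Fin.castSucc e) g =
      MvPolynomial.C ((0 : ℕ).descFactorial i : k) * MvPolynomial.rename Fin.castSucc (apolar e f) +
      MvPolynomial.C (m.descFactorial i : k) * (MvPolynomial.X (Fin.last n) ^ (m - i) *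
        MvPolynomial.rename Fin.castSucc (apolar e (apolar D f))) := by
    intro i e
    have h1 := apolar_lift i 0 e f
    rw [pow_zero, one_mul, Nat.zero_sub, pow_zero, one_mul] at h1
    rw [hg, apolar_add_right, h1, apolar_lift]
  have hle : fibIdeal m 0 D If Idf ≤ Ig := by
    rw [fibIdeal, auxIdeal, sup_le_iff, sup_le_iff]
    refine ⟨?_, ?_, ?_⟩
    · rw [Ideal.span_singleton_le_iff_mem, hIg]
      have h1 := act m 1
      have h2 := act 0 D
      have h3 : apolar D (apolar D f) = 0 := by rw [← apolar_mul, hD]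
      have h4 : ∀ h : MvPolynomial (Fin n) k, apolar 1 h = h := by
        intro h
        induction h using MvPolynomial.induction_on' with
        | add p q hp hq => rw [apolar_add_right, hp, hq]
        | monomial b e =>
          rw [← MvPolynomial.C_1, ← MvPolynomial.monomial_zero', apolar_monomial]
          simp
      rw [map_one, mul_one, h4, Nat.sub_self, Nat.descFactorial_self] at h1
      rw [pow_zero, one_mul, h3] at h2
      have e : (MvPolynomial.X (Fin.last n) : MvPolynomial (Fin (n + 1)) k) ^ m -
          MvPolynomial.C 0 * MvPolynomial.X (Fin.last n) -
          MvPolynomial.C ((m.factorial : k)) * MvPolynomial.rename Fin.castSucc D =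
          MvPolynomial.X (Fin.last n) ^ m +
          MvPolynomial.C (-(m.factorial : k)) * MvPolynomial.rename Fin.castSucc D := by
        rw [map_neg, map_zero]; ring
      rw [e, apolar_add_left, apolar_C_mul_left, h1, h2, h4]
      have h0 : Nat.descFactorial 0 m = 0 := Nat.descFactorial_eq_zero_iff_lt.2 (by lia)
      rw [h0]
      simp
    · rw [Ideal.map_le_iff_le_comap]
      intro e he
      rw [Ideal.mem_comap, hIg]
      have h := act 0 e
      rw [(hIf e).1 he, (hIdf e).1 (hI he), pow_zero, one_mul] at h
      rw [h]
      simp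
    · rw [Ideal.span_le]
      rintro _ ⟨e, he, rfl⟩
      rw [SetLike.mem_coe, hIg]
      have h := act 1 e
      rw [(hIdf e).1 he, pow_one] at h
      simp only
      rw [h]
      simp
  refine le_antisymm ?_ hle
  intro p hp
  apply mem_of_map_mem (lastEquiv k n)
  rw [map_fibIdeal]
  set F : (MvPolynomial (Fin n) k)[X] := X ^ m - C (algebraMap k _ (0 : k)) * X -
        C (MvPolynomial.C (m.factorial : k) * D) with hF
  have hFm : F.Monic := F_monic _ _ hm
  have hdeg : F.natDegree ≤ m := by
    rw [hF]
    compute_degree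
    all_goals lia
  have hr : (lastEquiv k n).symm (lastEquiv k n p %ₘ F) ∈ Ig := by
    have h1 : (lastEquiv k n).symm F ∈ Ig := by
      apply hle
      apply mem_of_map_mem (lastEquiv k n)
      rw [map_fibIdeal, AlgEquiv.apply_symm_apply]
      exact Ideal.mem_sup_left (Ideal.mem_span_singleton_self _)
    have h2 : lastEquiv k n p %ₘ F = lastEquiv k n p - F * (lastEquiv k n p /ₘ F) :=
      modByMonic_eq_sub_mul_div _ _
    rw [h2, map_sub, map_mul, AlgEquiv.symm_apply_apply]
    exact Ig.sub_mem hp (Ig.mul_mem_right _ h1)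
  have hrdeg : (lastEquiv k n p %ₘ F).degree < m :=
    lt_of_lt_of_le (degree_modByMonic_lt _ hFm) (natDegree_le_iff_degree_le.1 hdeg)
  generalize hR : lastEquiv k n p %ₘ F = r at hr hrdeg
  have hsum : (lastEquiv k n).symm r = ∑ i ∈ Finset.range m,
      MvPolynomial.X (Fin.last n) ^ i * MvPolynomial.rename Fin.castSucc (r.coeff i) := by
    rw [AlgEquiv.symm_apply_eq, map_sum]
    simp only [map_mul, map_pow, lastEquiv_last, lastEquiv_rename]
    have hlt : r.natDegree < m := by
      by_cases h0 : r = 0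
      · rw [h0, natDegree_zero]; lia
      · exact (natDegree_lt_iff_degree_lt h0).2 hrdeg
    refine (as_sum_range' r m hlt).trans (Finset.sum_congr rfl fun i _ => ?_)
    rw [← C_mul_X_pow_eq_monomial, mul_comm]
  rw [hIg, hsum, apolar_sum_left] at hr
  simp only [act] at hr
  have hr2 := congrArg (lastEquiv k n) hr
  simp only [map_sum, map_add, map_mul, map_pow, lastEquiv_last, lastEquiv_rename, lastEquiv_C,
    map_zero] at hr2
  have hr3 : ∀ j, (∑ i ∈ Finset.range m,
      ((if j = 0 then MvPolynomial.C ((0 : ℕ).descFactorial i : k) * apolar (r.coeff i) f else 0) +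
      (if j = m - i then MvPolynomial.C (m.descFactorial i : k) *
        apolar (r.coeff i) (apolar D f) else 0))) = 0 := by
    intro j
    have := congrArg (fun q => q.coeff j) hr2
    simp only [finsetSum_coeff, coeff_add, coeff_zero] at this
    refine Eq.trans (Finset.sum_congr rfl fun i _ => ?_) this
    rw [← C_mul, coeff_C, coeff_C_mul, coeff_mul_C, coeff_X_pow]
    congr 1
    split_ifs <;> simp
  apply mem_bb_of
  · rw [hR, hIf]
    have h := hr3 0
    rw [Finset.sum_eq_single 0] at h
    · simpa [hm0.symm] using h
    · intro i hi hi0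
      rw [Finset.mem_range] at hi
      have h0 : Nat.descFactorial 0 i = 0 := Nat.descFactorial_eq_zero_iff_lt.2 (by lia)
      rw [h0, if_neg (by lia : ¬ (0 = m - i))]
      simp
    · intro h; exact absurd (Finset.mem_range.2 (by lia)) h
  · intro i
    rw [hR, hIdf]
    by_cases him : i + 1 < m
    · have h := hr3 (m - (i + 1))
      rw [Finset.sum_eq_single (i + 1)] at h
      · rw [if_neg (by lia), if_pos rfl, zero_add, mul_eq_zero] at h
        refine h.resolve_left ?_
        rw [MvPolynomial.C_eq_zero, Nat.cast_eq_zero, Nat.descFactorial_eq_zero_iff_lt]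
        lia
      · intro j hj hji
        rw [Finset.mem_range] at hj
        rw [if_neg (by lia), if_neg (by lia), add_zero]
      · intro h; exact absurd (Finset.mem_range.2 him) h
    · rw [coeff_eq_zero_of_degree_lt (lt_of_lt_of_le hrdeg (by exact_mod_cast not_lt.1 him)),
        apolar_zero_left]

theorem fiber_zero {k : Type*} [Field k] {n : ℕ} (m : ℕ)
    (D : MvPolynomial (Fin n) k) (If Idf : Ideal (MvPolynomial (Fin n) k)) :
    Nonempty ((MvPolynomial (Fin (n + 2)) k ⧸
          (totalIdeal m D If Idf ⊔
            Ideal.span {(MvPolynomial.X (Fin.last (n + 1)) : MvPolynomial (Fin (n + 2)) k)}))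
        ≃ₐ[k] (MvPolynomial (Fin (n + 1)) k ⧸ fibIdeal m 0 D If Idf)) := by
  let π : MvPolynomial (Fin (n + 2)) k →ₐ[k] MvPolynomial (Fin (n + 1)) k :=
    ((aeval (0 : MvPolynomial (Fin (n + 1)) k)).restrictScalars k).comp
      (lastEquiv k (n + 1)).toAlgHom
  have hπ : ∀ p, π p = (lastEquiv k (n + 1) p).eval 0 := by
    intro p
    rw [← coe_aeval_eq_eval]
    rfl
  have hπr : ∀ p, π (MvPolynomial.rename Fin.castSucc p) = p := by
    intro p
    rw [hπ, lastEquiv_rename, eval_C]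
  have hπt : π (MvPolynomial.X (Fin.last (n + 1))) = 0 := by
    rw [hπ, lastEquiv_last, eval_X]
  have hπs : Function.Surjective π := fun p => ⟨_, hπr p⟩
  have hπk : ∀ p, π p = 0 → p ∈ Ideal.span
      {(MvPolynomial.X (Fin.last (n + 1)) : MvPolynomial (Fin (n + 2)) k)} := by
    intro p hp
    rw [hπ, ← coeff_zero_eq_eval_zero, ← X_dvd_iff, ← lastEquiv_last] at hp
    obtain ⟨u, hu⟩ := hp
    rw [Ideal.mem_span_singleton]
    refine ⟨(lastEquiv k (n + 1)).symm u, (lastEquiv k (n + 1)).injective ?_⟩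
    rw [hu, map_mul, AlgEquiv.apply_symm_apply]
  set W := totalIdeal m D If Idf ⊔
    Ideal.span {(MvPolynomial.X (Fin.last (n + 1)) : MvPolynomial (Fin (n + 2)) k)} with hW
  have htW : MvPolynomial.X (Fin.last (n + 1)) ∈ W :=
    Ideal.mem_sup_right (Ideal.mem_span_singleton_self _)
  let ψ := (Ideal.Quotient.mkₐ k (fibIdeal m 0 D If Idf)).comp π
  have hψ : Function.Surjective ψ := (Ideal.Quotient.mkₐ_surjective k _).comp hπs
  have hmem : ∀ p, p ∈ RingHom.ker ψ ↔ π p ∈ fibIdeal m 0 D If Idf := by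
    intro p
    rw [RingHom.mem_ker, ← Ideal.Quotient.eq_zero_iff_mem]
    rfl
  have hker : RingHom.ker ψ = W := by
    apply le_antisymm
    · intro p hp
      rw [hmem] at hp
      have h1 : fibIdeal m 0 D If Idf ≤ Ideal.comap
          (MvPolynomial.rename Fin.castSucc : _ →ₐ[k] MvPolynomial (Fin (n + 2)) k) W := by
        rw [fibIdeal, sup_le_iff]
        constructor
        · rw [Ideal.span_singleton_le_iff_mem, Ideal.mem_comap]
          have h2 : (MvPolynomial.X (Fin.castSucc (Fin.last n)) :
            MvPolynomial (Fin (n + 2)) k) ^ m -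
            MvPolynomial.X (Fin.last (n + 1)) * MvPolynomial.X (Fin.castSucc (Fin.last n)) -
            MvPolynomial.C ((m.factorial : k)) *
            MvPolynomial.rename (Fin.castSucc ∘ Fin.castSucc) D ∈ W :=
            Ideal.mem_sup_left (Ideal.mem_sup_left (Ideal.mem_span_singleton_self _))
          have h3 := W.add_mem h2
            (W.mul_mem_right (MvPolynomial.X (Fin.castSucc (Fin.last n))) htW)
          convert h3 using 1
          simp only [map_sub, map_mul, map_pow, MvPolynomial.rename_X, MvPolynomial.rename_C,
            MvPolynomial.rename_rename, map_zero]
          ring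
        · rw [← Ideal.map_le_iff_le_comap]
          exact le_sup_of_le_left (le_sup_of_le_right le_rfl)
      have h2 := h1 hp
      rw [Ideal.mem_comap] at h2
      have h3 : p - MvPolynomial.rename Fin.castSucc (π p) ∈ W := by
        refine Ideal.mem_sup_right (hπk _ ?_)
        rw [map_sub, hπr, sub_self]
      have := W.add_mem h3 h2
      rwa [sub_add_cancel] at this
    · rw [hW, totalIdeal, sup_le_iff, sup_le_iff]
      refine ⟨⟨?_, ?_⟩, ?_⟩
      · rw [Ideal.span_singleton_le_iff_mem, hmem]
        refine Ideal.mem_sup_left ?_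
        rw [← MvPolynomial.rename_rename, ← MvPolynomial.rename_X (R := k) Fin.castSucc (Fin.last n),
          ← MvPolynomial.rename_C (R := k) Fin.castSucc]
        simp only [map_sub, map_mul, map_pow, hπr, hπt, map_zero]
        refine Ideal.subset_span ?_
        rw [Set.mem_singleton_iff]
        have hC : π (MvPolynomial.C (m.factorial : k)) = MvPolynomial.C (m.factorial : k) :=
          π.commutes _
        rw [hC]
      · rw [Ideal.map_le_iff_le_comap]
        intro e he
        rw [Ideal.mem_comap, hmem, hπr]
        exact Ideal.mem_sup_right he
      · rw [Ideal.span_singleton_le_iff_mem, hmem, hπt]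
        exact Ideal.zero_mem _
  exact ⟨(Ideal.quotientEquivAlgOfEq k hker.symm).trans
    (Ideal.quotientKerAlgEquivOfSurjective hψ)⟩


end Helpers

/-- Let `k` be an algebraically closed field of characteristic zero,
`f ∈ k[x₁,…,xₙ]`, `∂ ∈ k[y₁,…,yₙ]` with `∂² ∘ f = 0`, `m ≥ 2`, and
`g = f + X^m·(∂ ∘ f) ∈ k[x₁,…,xₙ,X]`. Let
`J = k[y,α]·Ann_{k[y]}(f) + k[y,α]·α·Ann_{k[y]}(∂ ∘ f)`. Then the `k[t]`-algebra
`B = k[y,α,t]/((α^m − t·α − m!·∂) + J·k[y,α,t])` is flat over `k[t]`; its fiber over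
`t = 0` is isomorphic as a `k`-algebra to the apolar algebra of `g`; and for every
`λ ≠ 0` its fiber over `t = λ`, namely `k[y,α]/((α^m − λ·α − m!·∂) + J)`, is isomorphic
as a `k`-algebra to the product of the apolar algebra of `f` with `m − 1` copies of the
apolar algebra of `∂ ∘ f`. -/
theorem deformations_stmt19 {k : Type*} [Field k] [IsAlgClosed k] [CharZero k] {n : ℕ}
    (f D : MvPolynomial (Fin n) k)
    (hD : apolar (D * D) f = 0)
    (m : ℕ) (hm : 2 ≤ m)
    (g : MvPolynomial (Fin (n + 1)) k)
    (hg : g = MvPolynomial.rename Fin.castSucc f +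
      (MvPolynomial.X (Fin.last n)) ^ m *
        MvPolynomial.rename Fin.castSucc (apolar D f))
    -- the apolar ideals of f, ∂ ∘ f and g
    (If Idf : Ideal (MvPolynomial (Fin n) k)) (Ig : Ideal (MvPolynomial (Fin (n + 1)) k))
    (hIf : (If : Set (MvPolynomial (Fin n) k)) = {e | apolar e f = 0})
    (hIdf : (Idf : Set (MvPolynomial (Fin n) k)) = {e | apolar e (apolar D f) = 0})
    (hIg : (Ig : Set (MvPolynomial (Fin (n + 1)) k)) = {e | apolar e g = 0}) :
    -- B is flat over k[t]
    RingHom.Flat (totalStructMap m D If Idf) ∧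
    -- the fiber of B over t = 0 is isomorphic to the apolar algebra of g
    Nonempty
      ((MvPolynomial (Fin (n + 2)) k ⧸
          (totalIdeal m D If Idf ⊔
            Ideal.span {(MvPolynomial.X (Fin.last (n + 1)) : MvPolynomial (Fin (n + 2)) k)}))
        ≃ₐ[k] (MvPolynomial (Fin (n + 1)) k ⧸ Ig)) ∧
    -- the fiber over t = λ ≠ 0, namely k[y,α]/((α^m − λ·α − m!·∂) + J), is isomorphic
    -- to (apolar algebra of f) × (m − 1 copies of the apolar algebra of ∂ ∘ f)
    (∀ lam : k, lam ≠ 0 →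
      Nonempty
        ((MvPolynomial (Fin (n + 1)) k ⧸
            (Ideal.span
              {(MvPolynomial.X (Fin.last n) : MvPolynomial (Fin (n + 1)) k) ^ m -
                MvPolynomial.C lam * MvPolynomial.X (Fin.last n) -
                MvPolynomial.C ((m.factorial : k)) * MvPolynomial.rename Fin.castSucc D}
              ⊔ auxIdeal If Idf))
          ≃ₐ[k]
          ((MvPolynomial (Fin n) k ⧸ If) ×
            (Fin (m - 1) → MvPolynomial (Fin n) k ⧸ Idf)))) := by
  have hIf' : ∀ e, e ∈ If ↔ apolar e f = 0 := fun e => by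
    rw [← SetLike.mem_coe, hIf, Set.mem_ofPred_eq]
  have hIdf' : ∀ e, e ∈ Idf ↔ apolar e (apolar D f) = 0 := fun e => by
    rw [← SetLike.mem_coe, hIdf, Set.mem_ofPred_eq]
  have hIg' : ∀ e, e ∈ Ig ↔ apolar e g = 0 := fun e => by
    rw [← SetLike.mem_coe, hIg, Set.mem_ofPred_eq]
  have hcol : ∀ e, e ∈ Idf ↔ e * D ∈ If := fun e => by rw [hIdf', hIf', apolar_mul]
  have hI : If ≤ Idf := fun e he => (hcol e).2 (If.mul_mem_right _ he)
  have hDI : D ∈ Idf := (hcol D).2 ((hIf' _).2 hD)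
  have hd : ∀ e ∈ Idf, MvPolynomial.C (m.factorial : k) * D * e ∈ If := by
    intro e he
    rw [mul_assoc, mul_comm D e]
    exact If.mul_mem_left _ ((hcol e).1 he)
  refine ⟨flat_total m hm D If Idf hI hd, ?_, ?_⟩
  · rw [Ig_eq_fibIdeal f D hD m hm g hg If Idf Ig hIf' hIdf' hIg' hI]
    exact fiber_zero m D If Idf
  · intro lam hl
    obtain ⟨e⟩ := fiber_core (k := k) hI hd (Idf.mul_mem_left _ hDI) hm lam hl
    exact ⟨(Ideal.quotientEquivAlg (fibIdeal m lam D If Idf) _ (lastEquiv k n)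
      (map_fibIdeal m lam D If Idf).symm).trans e⟩
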